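/- Let a ∈ (0,1] and let θ ∈ C¹((0,∞)) with r ↦ r θ'(r) bounded on (0,∞). For s ≥ 0 define θ_s'(ρ) := e^{s/2} θ'(e^{s/2} ρ) and the quadratic forms l_s[φ] := ∫_U [ |∂_ρφ − θ_s'(ρ)∂_φφ|² + |∂_φφ|²/ρ² + (ρ²/16) |φ|² ] ρ dρ dφ and l[φ] := ∫_U [ |∂_ρφ|² + |∂_φφ|²/ρ² + (ρ²/16) |φ|² ] ρ dρ dφ. Then there exists a constant C ≥ 1, independent of s, such that C⁻¹ l[φ] ≤ l_s[φ] ≤ C l[φ] for every φ ∈ C¹_c(U) and every s ≥ 0. -/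

import Mathlib

open MeasureTheory Real Set

noncomputable section

/-- The half-strip `U = (0,∞) × (0,2πa)` of curvilinear coordinates `(ρ,φ)`. -/
def wedgeU (a : ℝ) : Set (ℝ × ℝ) := Ioi (0:ℝ) ×ˢ Ioo (0:ℝ) (2 * π * a)

theorem ss_integrable (a : ℝ) (g : ℝ → ℝ) (hg : ContinuousOn g (Ioi 0))
    (ψ : ℝ × ℝ → ℝ) (h1 : ContDiff ℝ 1 ψ) (h2 : HasCompactSupport ψ)
    (h3 : tsupport ψ ⊆ wedgeU a) :
    IntegrableOn (fun p : ℝ × ℝ => ((fderiv ℝ ψ p (1, 0) - g p.1 * fderiv ℝ ψ p (0, 1)) ^ 2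
                + (fderiv ℝ ψ p (0, 1)) ^ 2 / p.1 ^ 2
                + p.1 ^ 2 / 16 * (ψ p) ^ 2) * p.1) (wedgeU a) := by
  have hpos : ∀ p ∈ tsupport ψ, (0:ℝ) < p.1 := fun p hp => (h3 hp).1
  have hK : IntegrableOn (fun p : ℝ × ℝ =>
      ((fderiv ℝ ψ p (1, 0) - g p.1 * fderiv ℝ ψ p (0, 1)) ^ 2
                + (fderiv ℝ ψ p (0, 1)) ^ 2 / p.1 ^ 2
                + p.1 ^ 2 / 16 * (ψ p) ^ 2) * p.1) (tsupport ψ) := by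
    apply ContinuousOn.integrableOn_compact h2
    have hd : Continuous (fderiv ℝ ψ) := h1.continuous_fderiv (by norm_num)
    have e1 : ContinuousOn (fun p : ℝ × ℝ => fderiv ℝ ψ p (1, 0)) (tsupport ψ) :=
      (hd.clm_apply continuous_const).continuousOn
    have e2 : ContinuousOn (fun p : ℝ × ℝ => fderiv ℝ ψ p (0, 1)) (tsupport ψ) :=
      (hd.clm_apply continuous_const).continuousOn
    have e3 : ContinuousOn (fun p : ℝ × ℝ => g p.1) (tsupport ψ) :=
      hg.comp continuous_fst.continuousOn hpos
    have e4 : ContinuousOn (fun p : ℝ × ℝ => p.1) (tsupport ψ) := continuous_fst.continuousOn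
    have e5 : ContinuousOn ψ (tsupport ψ) := h1.continuous.continuousOn
    exact (((((e1.sub (e3.mul e2)).pow 2).add ((e2.pow 2).div (e4.pow 2)
      (fun p hp => pow_ne_zero 2 (hpos p hp).ne'))).add
      (((e4.pow 2).div_const 16).mul (e5.pow 2))).mul e4)
  refine hK.of_forall_diff_eq_zero (measurableSet_Ioi.prod measurableSet_Ioo) ?_
  rintro p ⟨-, hp⟩
  have z1 : ψ p = 0 := image_eq_zero_of_notMem_tsupport hp
  have z2 : fderiv ℝ ψ p = 0 :=
    image_eq_zero_of_notMem_tsupport (fun h => hp (tsupport_fderiv_subset ℝ h))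
  simp [z1, z2]

theorem ss_pointwise (B x y t r w : ℝ) (hr : 0 < r) (ht : |r * t| ≤ B) (hw : 0 ≤ w) :
    ((x - t * y) ^ 2 + y ^ 2 / r ^ 2 + w) * r
      ≤ (2 + 2 * B ^ 2) * ((x ^ 2 + y ^ 2 / r ^ 2 + w) * r) := by
  have h1 : (r * t) ^ 2 ≤ B ^ 2 := sq_le_sq' (abs_le.1 ht).1 (abs_le.1 ht).2
  have h2 : (t * y) ^ 2 ≤ B ^ 2 * (y ^ 2 / r ^ 2) := by
    have : (t * y) ^ 2 = (r * t) ^ 2 * (y ^ 2 / r ^ 2) := by field_simp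
    rw [this]
    exact mul_le_mul_of_nonneg_right h1 (by positivity)
  have h3 : 0 ≤ y ^ 2 / r ^ 2 := by positivity
  have h4 : (x - t * y) ^ 2 ≤ 2 * x ^ 2 + 2 * (t * y) ^ 2 := by nlinarith [sq_nonneg (x + t * y)]
  have h5 : 0 ≤ B ^ 2 * x ^ 2 := by positivity
  have h6 : 0 ≤ B ^ 2 * w := by positivity
  rw [← mul_assoc]
  apply mul_le_mul_of_nonneg_right _ hr.le
  nlinarith

/-- **Uniform comparability of the self-similar quadratic forms `l_s` and `l`.**
If `ρ θ'(ρ)` is bounded, then with `θ_s'(ρ) = e^{s/2} θ'(e^{s/2}ρ)` there is `C ≥ 1`,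
independent of `s`, such that `C⁻¹ l[φ] ≤ l_s[φ] ≤ C l[φ]` for all `φ ∈ C¹_c(U)`, `s ≥ 0`. -/
theorem self_similar_forms_comparable
    (a : ℝ) (ha : a ∈ Ioc (0:ℝ) 1)
    (θ θ' : ℝ → ℝ)
    (hderiv : ∀ r ∈ Ioi (0:ℝ), HasDerivAt θ (θ' r) r)
    (hcont : ContinuousOn θ' (Ioi 0))
    (B : ℝ) (hB : ∀ r ∈ Ioi (0:ℝ), |r * θ' r| ≤ B) :
    ∃ C ≥ (1:ℝ), ∀ s ≥ (0:ℝ), ∀ ψ : ℝ × ℝ → ℝ,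
      ContDiff ℝ 1 ψ → HasCompactSupport ψ → tsupport ψ ⊆ wedgeU a →
      C⁻¹ * (∫ p in wedgeU a,
              ((fderiv ℝ ψ p (1, 0)) ^ 2 + (fderiv ℝ ψ p (0, 1)) ^ 2 / p.1 ^ 2
                + p.1 ^ 2 / 16 * (ψ p) ^ 2) * p.1)
          ≤ (∫ p in wedgeU a,
              ((fderiv ℝ ψ p (1, 0)
                  - Real.exp (s / 2) * θ' (Real.exp (s / 2) * p.1)
                    * fderiv ℝ ψ p (0, 1)) ^ 2
                + (fderiv ℝ ψ p (0, 1)) ^ 2 / p.1 ^ 2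
                + p.1 ^ 2 / 16 * (ψ p) ^ 2) * p.1)
        ∧ (∫ p in wedgeU a,
              ((fderiv ℝ ψ p (1, 0)
                  - Real.exp (s / 2) * θ' (Real.exp (s / 2) * p.1)
                    * fderiv ℝ ψ p (0, 1)) ^ 2
                + (fderiv ℝ ψ p (0, 1)) ^ 2 / p.1 ^ 2
                + p.1 ^ 2 / 16 * (ψ p) ^ 2) * p.1)
          ≤ C * (∫ p in wedgeU a,
              ((fderiv ℝ ψ p (1, 0)) ^ 2 + (fderiv ℝ ψ p (0, 1)) ^ 2 / p.1 ^ 2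
                + p.1 ^ 2 / 16 * (ψ p) ^ 2) * p.1) := by
  have hCpos : (0:ℝ) < 2 + 2 * B ^ 2 := by positivity
  refine ⟨2 + 2 * B ^ 2, by nlinarith [sq_nonneg B], fun s _ ψ h1 h2 h3 => ?_⟩
  have hmeas : MeasurableSet (wedgeU a) := measurableSet_Ioi.prod measurableSet_Ioo
  have he := Real.exp_pos (s / 2)
  have i0 := ss_integrable a (fun _ => 0) continuousOn_const ψ h1 h2 h3
  simp only [zero_mul, sub_zero] at i0
  have i1 := ss_integrable a (fun r => Real.exp (s / 2) * θ' (Real.exp (s / 2) * r))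
    (continuousOn_const.mul (hcont.comp (by fun_prop) (fun r hr => mul_pos he hr))) ψ h1 h2 h3
  have hb : ∀ p ∈ wedgeU a, |p.1 * (Real.exp (s / 2) * θ' (Real.exp (s / 2) * p.1))| ≤ B := by
    intro p hp
    have := hB (Real.exp (s / 2) * p.1) (mul_pos he hp.1)
    rwa [show p.1 * (Real.exp (s / 2) * θ' (Real.exp (s / 2) * p.1))
      = Real.exp (s / 2) * p.1 * θ' (Real.exp (s / 2) * p.1) by ring]
  constructor
  · rw [inv_mul_le_iff₀ hCpos, ← integral_const_mul]
    refine setIntegral_mono_on i0 (i1.const_mul _) hmeas fun p hp => ?_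
    have := ss_pointwise B (fderiv ℝ ψ p (1, 0)
      - Real.exp (s / 2) * θ' (Real.exp (s / 2) * p.1) * fderiv ℝ ψ p (0, 1))
      (fderiv ℝ ψ p (0, 1)) (-(Real.exp (s / 2) * θ' (Real.exp (s / 2) * p.1))) p.1
      (p.1 ^ 2 / 16 * (ψ p) ^ 2) hp.1 (by rw [mul_neg, abs_neg]; exact hb p hp) (by positivity)
    rwa [neg_mul, sub_neg_eq_add, sub_add_cancel] at this
  · rw [← integral_const_mul]
    refine setIntegral_mono_on i1 (i0.const_mul _) hmeas fun p hp => ?_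
    exact ss_pointwise B _ _ _ p.1 _ hp.1 (hb p hp) (by positivity)
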